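/- For a double complex of complex vector spaces and every bidegree (p,q), the map ∂ induces a well-defined linear isomorphism from E^{p,q} = (ker ∂∂̄ ∩ K^{p,q})/(ker ∂ + im ∂̄) onto B^{p+1,q} = (ker ∂̄ ∩ im ∂ ∩ K^{p+1,q})/im ∂∂̄. -/

import Mathlib

open Submodule

/-- A double complex of complex vector spaces, presented as a bigraded direct-sum
decomposition `K p q` of an ambient space `V`, together with anticommuting
differentials `d1 = ∂` (of bidegree `(1,0)`) and `d2 = ∂̄` (of bidegree `(0,1)`). -/
structure DoubleComplex (V : Type*) [AddCommGroup V] [Module ℂ V] where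
  K : ℤ → ℤ → Submodule ℂ V
  isInternal : DirectSum.IsInternal fun pq : ℤ × ℤ => K pq.1 pq.2
  d1 : V →ₗ[ℂ] V
  d2 : V →ₗ[ℂ] V
  d1_mem : ∀ p q : ℤ, ∀ x ∈ K p q, d1 x ∈ K (p + 1) q
  d2_mem : ∀ p q : ℤ, ∀ x ∈ K p q, d2 x ∈ K p (q + 1)
  d1_d1 : d1 ∘ₗ d1 = 0
  d2_d2 : d2 ∘ₗ d2 = 0
  anticomm : d1 ∘ₗ d2 + d2 ∘ₗ d1 = 0

/-- The dimension (as a natural number) of the quotient of a submodule `M` of `V`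
by (the trace on `M` of) a submodule `N`. -/
noncomputable def qdim {V : Type*} [AddCommGroup V] [Module ℂ V]
    (M N : Submodule ℂ V) : ℕ :=
  Module.finrank ℂ (↥M ⧸ N.comap M.subtype)

/-- The linear map between quotients `M₁/N₁ → M₂/N₂` induced by the identity,
for `M₁ ≤ M₂` and `N₁ ≤ N₂`. -/
def quotMap {V : Type*} [AddCommGroup V] [Module ℂ V] {M₁ N₁ M₂ N₂ : Submodule ℂ V}
    (hM : M₁ ≤ M₂) (hN : N₁ ≤ N₂) :
    (↥M₁ ⧸ N₁.comap M₁.subtype) →ₗ[ℂ] (↥M₂ ⧸ N₂.comap M₂.subtype) :=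
  Submodule.mapQ _ _ (Submodule.inclusion hM) fun _ hx => hN hx

namespace DoubleComplex

variable {V : Type*} [AddCommGroup V] [Module ℂ V] (D : DoubleComplex V)

/-- A double complex is bounded if only finitely many components are non-zero. -/
def Bounded : Prop := Set.Finite {pq : ℤ × ℤ | D.K pq.1 pq.2 ≠ ⊥}

lemma d1_d1_apply (x : V) : D.d1 (D.d1 x) = 0 := by
  simpa using LinearMap.ext_iff.mp D.d1_d1 x

lemma d2_d2_apply (x : V) : D.d2 (D.d2 x) = 0 := by
  simpa using LinearMap.ext_iff.mp D.d2_d2 x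

lemma anticomm_apply (x : V) : D.d1 (D.d2 x) + D.d2 (D.d1 x) = 0 := by
  simpa using LinearMap.ext_iff.mp D.anticomm x

/-- Numerator `ker ∂̄ ∩ K^{p,q}` of the Dolbeault cohomology. -/
def dolN (p q : ℤ) : Submodule ℂ V := LinearMap.ker D.d2 ⊓ D.K p q
/-- Denominator `∂̄ K^{p,q-1}` of the Dolbeault cohomology. -/
def dolD (p q : ℤ) : Submodule ℂ V := (D.K p (q - 1)).map D.d2
/-- Numerator `ker ∂ ∩ K^{p,q}` of the conjugate Dolbeault cohomology. -/
def conjN (p q : ℤ) : Submodule ℂ V := LinearMap.ker D.d1 ⊓ D.K p q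
/-- Denominator `∂ K^{p-1,q}` of the conjugate Dolbeault cohomology. -/
def conjD (p q : ℤ) : Submodule ℂ V := (D.K (p - 1) q).map D.d1
/-- Numerator `ker ∂ ∩ ker ∂̄ ∩ K^{p,q}` of the Bott-Chern cohomology. -/
def bcN (p q : ℤ) : Submodule ℂ V := LinearMap.ker D.d1 ⊓ LinearMap.ker D.d2 ⊓ D.K p q
/-- Denominator `∂∂̄ K^{p-1,q-1}` of the Bott-Chern cohomology. -/
def bcD (p q : ℤ) : Submodule ℂ V := (D.K (p - 1) (q - 1)).map (D.d1 ∘ₗ D.d2)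
/-- Numerator `ker ∂∂̄ ∩ K^{p,q}` of the Aeppli cohomology. -/
def aeN (p q : ℤ) : Submodule ℂ V := LinearMap.ker (D.d1 ∘ₗ D.d2) ⊓ D.K p q
/-- Denominator `∂ K^{p-1,q} + ∂̄ K^{p,q-1}` of the Aeppli cohomology. -/
def aeD (p q : ℤ) : Submodule ℂ V := (D.K (p - 1) q).map D.d1 ⊔ (D.K p (q - 1)).map D.d2

/-- The degree-`k` part `Tot^k = ⊕_{p+q=k} K^{p,q}` of the total complex. -/
def Tot (k : ℤ) : Submodule ℂ V := ⨆ p : ℤ, D.K p (k - p)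
/-- The total differential `d = ∂ + ∂̄`. -/
def dT : V →ₗ[ℂ] V := D.d1 + D.d2
/-- Numerator `ker d ∩ Tot^k` of the de Rham cohomology of the total complex. -/
def dRN (k : ℤ) : Submodule ℂ V := LinearMap.ker D.dT ⊓ D.Tot k
/-- Denominator `d (Tot^{k-1})` of the de Rham cohomology of the total complex. -/
def dRD (k : ℤ) : Submodule ℂ V := (D.Tot (k - 1)).map D.dT

/-- Hodge number `h_∂̄^{p,q}`. -/
noncomputable def hDol (p q : ℤ) : ℕ := qdim (D.dolN p q) (D.dolD p q)
/-- Conjugate Hodge number `h_∂^{p,q}`. -/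
noncomputable def hConj (p q : ℤ) : ℕ := qdim (D.conjN p q) (D.conjD p q)
/-- Bott-Chern number `h_BC^{p,q}`. -/
noncomputable def hBC (p q : ℤ) : ℕ := qdim (D.bcN p q) (D.bcD p q)
/-- Aeppli number `h_A^{p,q}`. -/
noncomputable def hAe (p q : ℤ) : ℕ := qdim (D.aeN p q) (D.aeD p q)
/-- Betti number `b_k` of the total complex. -/
noncomputable def b (k : ℤ) : ℕ := qdim (D.dRN k) (D.dRD k)

/-- The `∂∂̄`-lemma property:
`ker ∂ ∩ ker ∂̄ ∩ (im ∂ + im ∂̄) ∩ K^{p,q} = ∂∂̄ K^{p-1,q-1}` for every `(p,q)`. -/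
def SatisfiesDdbarLemma : Prop :=
  ∀ p q : ℤ,
    LinearMap.ker D.d1 ⊓ LinearMap.ker D.d2 ⊓ (D.conjD p q ⊔ D.dolD p q) ⊓ D.K p q =
      D.bcD p q

end DoubleComplex

namespace DoubleComplex

variable {V : Type*} [AddCommGroup V] [Module ℂ V] (D : DoubleComplex V)

/-- Denominator `(ker ∂ + im ∂̄) ∩ K^{p,q}` of the Varouchas space
`E^{p,q} = ker ∂∂̄/(ker ∂ + im ∂̄)`. -/
def varED (p q : ℤ) : Submodule ℂ V := (LinearMap.ker D.d1 ⊓ D.K p q) ⊔ D.dolD p q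

/-- Numerator `ker ∂̄ ∩ im ∂ ∩ K^{p,q}` of the Varouchas space
`B^{p,q} = (ker ∂̄ ∩ im ∂)/im ∂∂̄`. -/
def varBN (p q : ℤ) : Submodule ℂ V := LinearMap.ker D.d2 ⊓ D.conjD p q

end DoubleComplex

/-!
Anticommutativity gives `ker ∂∂̄ = ∂⁻¹(ker ∂̄)`, so `∂` maps `ker ∂∂̄ ∩ K^{p,q}` onto
`ker ∂̄ ∩ ∂K^{p,q}`. Since `∂⁻¹(∂∂̄ K^{p,q-1}) = ker ∂ + ∂̄ K^{p,q-1}`, the modular law shows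
that the elements of `K^{p,q}` mapped by `∂` into `∂∂̄ K^{p,q-1}` are exactly those of
`(ker ∂ ∩ K^{p,q}) + ∂̄ K^{p,q-1}`.
-/

section InducedIsomorphism

variable {R U V W : Type*} [Ring R] [AddCommGroup U] [Module R U] [AddCommGroup V] [Module R V]
  [AddCommGroup W] [Module R W]

/-- The isomorphism `M/N ≃ M'/N'` of subquotients induced by a linear map `f` that maps `M` onto
`M'` and for which `N` and the preimage of `N'` have the same trace on `M`. As for `qdim`, `N` and
`N'` need not be contained in `M` and `M'`. -/
noncomputable def subquotientEquivOfMapEq (f : V →ₗ[R] W) {M N : Submodule R V}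
    {M' N' : Submodule R W} (hM : M.map f = M') (hN : ∀ x ∈ M, x ∈ N ↔ f x ∈ N') :
    (↥M ⧸ N.comap M.subtype) ≃ₗ[R] (↥M' ⧸ N'.comap M'.subtype) :=
  let g : ↥M →ₗ[R] ↥M' := f.restrict fun _ hx => hM ▸ mem_map_of_mem hx
  have g_surjective : Function.Surjective g := by
    rintro ⟨y, hy⟩
    obtain ⟨x, hx, rfl⟩ := hM.symm ▸ hy
    exact ⟨⟨x, hx⟩, rfl⟩
  have ker_mkQ_comp_g :
      N.comap M.subtype = LinearMap.ker ((N'.comap M'.subtype).mkQ ∘ₗ g) := by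
    ext x
    rw [LinearMap.ker_comp, ker_mkQ]
    exact hN x x.2
  quotEquivOfEq _ _ ker_mkQ_comp_g ≪≫ₗ
    LinearMap.quotKerEquivOfSurjective _ ((mkQ_surjective _).comp g_surjective)

theorem subquotientEquivOfMapEq_mk (f : V →ₗ[R] W) {M N : Submodule R V}
    {M' N' : Submodule R W} (hM : M.map f = M') (hN : ∀ x ∈ M, x ∈ N ↔ f x ∈ N')
    (x : V) (hx : x ∈ M) :
    subquotientEquivOfMapEq f hM hN (Submodule.Quotient.mk ⟨x, hx⟩) =
      Submodule.Quotient.mk ⟨f x, hM ▸ mem_map_of_mem hx⟩ :=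
  rfl

theorem ker_inf_sup_map_eq_inf_comap_map_comp (f : V →ₗ[R] W) {g : U →ₗ[R] V}
    {K : Submodule R V} {L : Submodule R U} (hL : L.map g ≤ K) :
    (LinearMap.ker f ⊓ K) ⊔ L.map g = K ⊓ (L.map (f ∘ₗ g)).comap f :=
  calc (LinearMap.ker f ⊓ K) ⊔ L.map g
      = K ⊓ (L.map g ⊔ LinearMap.ker f) := by
        rw [sup_comm, inf_comm K, sup_inf_assoc_of_le _ hL]
    _ = K ⊓ (L.map (f ∘ₗ g)).comap f := by rw [map_comp, comap_map_eq]

variable {d₁ d₂ : V →ₗ[R] V}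

theorem ker_comp_eq_of_anticomm (anticomm : d₁ ∘ₗ d₂ + d₂ ∘ₗ d₁ = 0) :
    LinearMap.ker (d₁ ∘ₗ d₂) = LinearMap.ker (d₂ ∘ₗ d₁) := by
  rw [eq_neg_of_add_eq_zero_left anticomm, LinearMap.ker_neg]

theorem map_ker_comp_inf_of_anticomm (anticomm : d₁ ∘ₗ d₂ + d₂ ∘ₗ d₁ = 0) (K : Submodule R V) :
    (LinearMap.ker (d₁ ∘ₗ d₂) ⊓ K).map d₁ = LinearMap.ker d₂ ⊓ K.map d₁ := by
  rw [ker_comp_eq_of_anticomm anticomm, LinearMap.ker_comp, inf_comm, inf_comm (LinearMap.ker d₂),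
    map_inf_eq_map_inf_comap]

theorem partial_induces_iso_E_B_general (anticomm : d₁ ∘ₗ d₂ + d₂ ∘ₗ d₁ = 0)
    {K L : Submodule R V} (hL : L.map d₂ ≤ K) :
    ∃ e : (↥(LinearMap.ker (d₁ ∘ₗ d₂) ⊓ K) ⧸ ((LinearMap.ker d₁ ⊓ K) ⊔ L.map d₂).comap
            (LinearMap.ker (d₁ ∘ₗ d₂) ⊓ K).subtype) ≃ₗ[R]
          (↥(LinearMap.ker d₂ ⊓ K.map d₁) ⧸ (L.map (d₁ ∘ₗ d₂)).comap
            (LinearMap.ker d₂ ⊓ K.map d₁).subtype),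
      ∀ (x : V) (hx : x ∈ LinearMap.ker (d₁ ∘ₗ d₂) ⊓ K),
        e (Submodule.Quotient.mk ⟨x, hx⟩) =
          Submodule.Quotient.mk
            ⟨d₁ x, map_ker_comp_inf_of_anticomm anticomm K ▸ mem_map_of_mem hx⟩ := by
  have mem_denominator_iff : ∀ x ∈ LinearMap.ker (d₁ ∘ₗ d₂) ⊓ K,
      x ∈ (LinearMap.ker d₁ ⊓ K) ⊔ L.map d₂ ↔ d₁ x ∈ L.map (d₁ ∘ₗ d₂) := by
    intro x hx
    rw [ker_inf_sup_map_eq_inf_comap_map_comp d₁ hL]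
    exact and_iff_right hx.2
  exact ⟨_, subquotientEquivOfMapEq_mk d₁ (map_ker_comp_inf_of_anticomm anticomm K)
    mem_denominator_iff⟩

end InducedIsomorphism

namespace DoubleComplex

variable {V : Type*} [AddCommGroup V] [Module ℂ V] (D : DoubleComplex V)

theorem dolD_le (p q : ℤ) : D.dolD p q ≤ D.K p q := by
  rw [dolD, map_le_iff_le_comap]
  intro x hx
  simpa only [mem_comap, sub_add_cancel] using D.d2_mem p (q - 1) x hx

theorem varBN_add_one (p q : ℤ) :
    D.varBN (p + 1) q = LinearMap.ker D.d2 ⊓ (D.K p q).map D.d1 := by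
  rw [varBN, conjD, add_sub_cancel_right]

theorem bcD_add_one (p q : ℤ) :
    D.bcD (p + 1) q = (D.K p (q - 1)).map (D.d1 ∘ₗ D.d2) := by
  rw [bcD, add_sub_cancel_right]

end DoubleComplex

open DoubleComplex in
/-- For a double complex of complex vector spaces and every bidegree `(p,q)`, the map
`∂` induces a well-defined linear isomorphism from
`E^{p,q} = ker ∂∂̄/(ker ∂ + im ∂̄)` onto `B^{p+1,q} = (ker ∂̄ ∩ im ∂)/im ∂∂̄`. -/
theorem partial_induces_iso_E_B {V : Type*} [AddCommGroup V] [Module ℂ V]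
    (D : DoubleComplex V) (p q : ℤ) :
    ∃ e : (↥(D.aeN p q) ⧸ (D.varED p q).comap (D.aeN p q).subtype) ≃ₗ[ℂ]
          (↥(D.varBN (p + 1) q) ⧸ (D.bcD (p + 1) q).comap (D.varBN (p + 1) q).subtype),
      ∀ (x : V) (hx : x ∈ D.aeN p q),
        e (Submodule.Quotient.mk ⟨x, hx⟩) =
          Submodule.Quotient.mk
            ⟨D.d1 x, by
              refine ⟨?_, Submodule.mem_map.mpr ⟨x, ?_, rfl⟩⟩
              · have h := D.anticomm_apply x
                have h1 : D.d1 (D.d2 x) = 0 := by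
                  simpa using LinearMap.mem_ker.mp hx.1
                rw [h1, zero_add] at h
                exact LinearMap.mem_ker.mpr h
              · rw [show p + 1 - 1 = p by ring]; exact hx.2⟩ := by
  -- The types to be rewritten also occur in the membership proof inside the goal.
  generalize_proofs _ d1_mem_varBN
  revert d1_mem_varBN
  rw [varBN_add_one, bcD_add_one]
  exact fun _ => partial_induces_iso_E_B_general D.anticomm (D.dolD_le p q)
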